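/- Let G be a connected graph with σ_2 ≥ t_{k+1} − k + 1 for some positive integer k. Then t_k ≥ t_{k+1}. (Corollary 6) -/

import Mathlib

open SimpleGraph

variable {V : Type*}

/-- A set of vertices is independent in `G`. -/
def IsIndSet (G : SimpleGraph V) (s : Set V) : Prop :=
  ∀ ⦃u⦄, u ∈ s → ∀ ⦃v⦄, v ∈ s → ¬ G.Adj u v

/-- The number of end-vertices (vertices of degree one) of a subgraph `H`. -/
noncomputable def endVertexCount {G : SimpleGraph V} (H : G.Subgraph) : ℕ :=
  {v : V | v ∈ H.verts ∧ (H.neighborSet v).ncard = 1}.ncard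

/-- `H` is a cycle; a single vertex and a single edge are regarded as
simple cycles of orders 1 and 2, respectively. -/
def IsCycleSubgraph {G : SimpleGraph V} (H : G.Subgraph) : Prop :=
  H.Connected ∧ (H.verts.ncard ≤ 2 ∨ ∀ v ∈ H.verts, (H.neighborSet v).ncard = 2)

/-- `H` is a `k`-ended tree in `G`: a tree with at most `k` end-vertices (leaves);
a cycle is regarded as a 1-ended tree. -/
def IsKEndedTree (G : SimpleGraph V) (k : ℕ) (H : G.Subgraph) : Prop :=
  (H.coe.IsTree ∧ endVertexCount H ≤ k) ∨ (1 ≤ k ∧ IsCycleSubgraph H)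

/-- `t k`: the order of a largest `k`-ended tree in `G`. -/
noncomputable def maxKEndedOrder (G : SimpleGraph V) (k : ℕ) : ℕ :=
  sSup {n | ∃ H : G.Subgraph, IsKEndedTree G k H ∧ H.verts.ncard = n}

/-- `σ m`: the minimum degree sum over independent sets of `m` vertices of `G`,
and `+∞` if the independence number of `G` is less than `m`. -/
noncomputable def minDegreeSum (G : SimpleGraph V) [Fintype V] [DecidableRel G.Adj]
    (m : ℕ) : ℕ∞ :=
  ⨅ s ∈ {s : Finset V | s.card = m ∧ IsIndSet G ↑s}, (∑ v ∈ s, G.degree v : ℕ∞)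

namespace SimpleGraph

variable {W : Type*} {T Γ : SimpleGraph W} {u v x y : W}

/-- The set of vertices of degree one. -/
def leafSet (T : SimpleGraph W) : Set W := {v | (T.neighborSet v).ncard = 1}

/-- Exchange the edge `e` for the edge joining `x` and `u`. -/
def exchange (T : SimpleGraph W) (x u : W) (e : Sym2 W) : SimpleGraph W :=
  (T ⊔ edge x u).deleteEdges {e}

lemma exchange_adj {e : Sym2 W} {a b : W} (hne : x ≠ u) :
    (T.exchange x u e).Adj a b ↔ (T.Adj a b ∨ s(a, b) = s(x, u)) ∧ s(a, b) ≠ e := by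
  simp only [exchange, deleteEdges_adj, sup_adj, edge_adj, Set.mem_singleton_iff, Sym2.eq_iff]
  grind

lemma exchange_le {e : Sym2 W} (hT : T ≤ Γ) (hxu : Γ.Adj x u) : T.exchange x u e ≤ Γ := by
  intro a b hab
  rw [exchange_adj hxu.ne] at hab
  obtain ⟨h | h, -⟩ := hab
  · exact hT h
  · rw [← mem_edgeSet, h]; exact hxu

/-- Adding a chord to a tree and deleting an edge of the resulting cycle gives a tree. -/
lemma IsTree.exchange [Finite W] (hT : T.IsTree) (hne : x ≠ u) (hxu : ¬ T.Adj x u)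
    {p : T.Walk x u} (hp : p.IsPath) {e : Sym2 W} (he : e ∈ p.edges) :
    (T.exchange x u e).IsTree := by
  obtain ⟨hconn, hcard⟩ := isTree_iff_connected_and_card.1 hT
  have heT : e ∈ T.edgeSet := p.edges_subset_edgeSet he
  have hconn' : (T ⊔ edge x u).Connected := hconn.mono le_sup_left
  have hadj : (T ⊔ edge x u).Adj u x := by simp [edge_adj, hne.symm]
  refine isTree_iff_connected_and_card.2 ⟨?_, ?_⟩
  · induction e with | h a b
    refine hconn'.connected_delete_edge_of_not_isBridge fun hb ↦ ?_
    have hcyc : (Walk.cons hadj (p.mapLe le_sup_left)).IsCycle := by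
      rw [Walk.cons_isCycle_iff]
      refine ⟨by simpa using hp, fun h ↦ hxu ?_⟩
      rw [Walk.edges_mapLe_eq_edges] at h
      exact (p.adj_of_mem_edges h).symm
    exact (isBridge_iff_forall_cycle_notMem (edgeSet_mono le_sup_left heT)).1 hb _ hcyc
      (by simp [he])
  · have hset : (T.exchange x u e).edgeSet = insert s(x, u) T.edgeSet \ {e} := by
      ext f
      induction f with | h a b
      rw [mem_edgeSet, exchange_adj hne]
      simp only [Set.mem_sdiff, Set.mem_insert_iff, mem_edgeSet, Set.mem_singleton_iff]
      tauto
    rw [Nat.card_coe_set_eq] at hcard ⊢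
    rw [hset, Set.ncard_sdiff_singleton_of_mem (Set.mem_insert_of_mem _ heT),
      Set.ncard_insert_of_notMem (by simpa using hxu)]
    simpa using hcard

lemma neighborSet_exchange_of_ne {e : Sym2 W} {z : W} (hne : x ≠ u) (hzx : z ≠ x) (hzu : z ≠ u)
    (hze : z ∉ e) : (T.exchange x u e).neighborSet z = T.neighborSet z := by
  ext w
  simp only [mem_neighborSet, exchange_adj hne, Sym2.eq_iff]
  have : s(z, w) ≠ e := by rintro rfl; simp at hze
  grind

lemma neighborSet_exchange_left {e : Sym2 W} (hne : x ≠ u) (hxe : x ∉ e) :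
    (T.exchange x u e).neighborSet x = insert u (T.neighborSet x) := by
  ext w
  simp only [mem_neighborSet, exchange_adj hne, Sym2.eq_iff, Set.mem_insert_iff]
  have : s(x, w) ≠ e := by rintro rfl; simp at hxe
  grind

lemma neighborSet_exchange_right {e : Sym2 W} (hne : x ≠ u) (hue : u ∉ e) :
    (T.exchange x u e).neighborSet u = insert x (T.neighborSet u) := by
  ext w
  simp only [mem_neighborSet, exchange_adj hne, Sym2.eq_iff, Set.mem_insert_iff]
  have : s(u, w) ≠ e := by rintro rfl; simp at hue
  grind

lemma Connected.mem_of_adj_closed (hT : T.Connected) {s : Set W} (hu : u ∈ s)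
    (hs : ∀ a ∈ s, ∀ b, T.Adj a b → b ∈ s) (z : W) : z ∈ s := by
  obtain ⟨p⟩ := hT.preconnected u z
  induction p with
  | nil => exact hu
  | cons h _ ih => exact ih (hs _ hu _ h)

/-- The existence, inside `Γ`, of a spanning tree with at most `k` leaves or of a
spanning cycle. -/
def HasSpanningEnded (Γ : SimpleGraph W) (k : ℕ) : Prop :=
  (∃ T ≤ Γ, T.IsTree ∧ T.leafSet.ncard ≤ k) ∨
    ∃ C ≤ Γ, C.Connected ∧ (Nat.card W ≤ 2 ∨ ∀ v, (C.neighborSet v).ncard = 2)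

/-- If the vertices of a path joining two leaves have degree at most two, then the path contains
every edge at each of its vertices. -/
lemma Walk.IsPath.neighborSet_toSubgraph_eq_of_mem_leafSet [Finite W] {p : T.Walk u v}
    (hp : p.IsPath) (hu : u ∈ T.leafSet) (hv : v ∈ T.leafSet) (huv : u ≠ v)
    (hdeg : ∀ z ∈ p.support, (T.neighborSet z).ncard ≤ 2) {z : W} (hz : z ∈ p.support) :
    p.toSubgraph.neighborSet z = T.neighborSet z := by
  have hnil : ¬ p.Nil := fun h ↦ huv h.eq
  refine Set.eq_of_subset_of_ncard_le (p.toSubgraph.neighborSet_subset z) ?_ (Set.toFinite _)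
  obtain ⟨i, rfl, hi⟩ := Walk.mem_support_iff_exists_getVert.1 hz
  rcases Nat.eq_zero_or_pos i with rfl | h0
  · simp only [Walk.getVert_zero, hp.neighborSet_toSubgraph_startpoint hnil]
    simp [show (T.neighborSet u).ncard = 1 from hu]
  rcases hi.eq_or_lt with rfl | hi
  · simp only [Walk.getVert_length, hp.neighborSet_toSubgraph_endpoint hnil]
    simp [show (T.neighborSet v).ncard = 1 from hv]
  · rw [hp.ncard_neighborSet_toSubgraph_internal_eq_two h0.ne' hi]
    exact hdeg _ hz

/-- A spanning tree with two leaves adjacent in `Γ` can be improved by one leaf, or closed up to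
a spanning cycle. -/
lemma IsTree.hasSpanningEnded_of_adj_leaves [Finite W] {k : ℕ} (hT : T.IsTree) (hle : T ≤ Γ)
    (hk : T.leafSet.ncard ≤ k + 1) (hu : u ∈ T.leafSet) (hv : v ∈ T.leafSet)
    (huv : Γ.Adj u v) : Γ.HasSpanningEnded k := by
  have hu1 : (T.neighborSet u).ncard = 1 := hu
  have hv1 : (T.neighborSet v).ncard = 1 := hv
  obtain ⟨p, hp⟩ := hT.connected.exists_isPath u v
  by_cases hbr : ∃ b ∈ p.support, 3 ≤ (T.neighborSet b).ncard
  · obtain ⟨b, hb, hb3⟩ := hbr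
    have hbu : b ≠ u := by rintro rfl; omega
    have hbv : b ≠ v := by rintro rfl; omega
    obtain ⟨e, he, hbe⟩ := (Walk.mem_support_iff_exists_mem_edges.1 hb).resolve_left hbv
    obtain ⟨y, rfl⟩ := hbe
    have hby : T.Adj b y := p.adj_of_mem_edges he
    have hTuv : ¬ T.Adj u v := by
      intro h
      have : p = Walk.cons h Walk.nil :=
        congrArg Subtype.val ((hT.isAcyclic.subsingleton_path u v).elim ⟨p, hp⟩ (Path.singleton h))
      subst this
      simp [hbu, hbv] at hb
    refine .inl ⟨T.exchange u v s(b, y), exchange_le hle huv, hT.exchange huv.ne hTuv hp he, ?_⟩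
    have hsub : (T.exchange u v s(b, y)).leafSet ⊆ insert y ((T.leafSet \ {u}) \ {v}) := by
      intro z hz
      by_contra hcon
      simp only [Set.mem_insert_iff, Set.mem_sdiff, Set.mem_singleton_iff, not_or] at hcon
      obtain ⟨hzy, hcon⟩ := hcon
      change ((T.exchange u v s(b, y)).neighborSet z).ncard = 1 at hz
      by_cases hzu : z = u
      · subst hzu
        rw [neighborSet_exchange_left huv.ne (by simp [hbu.symm, hzy]),
          Set.ncard_insert_of_notMem (by simpa using hTuv)] at hz
        omega
      by_cases hzv : z = v
      · subst hzv
        rw [neighborSet_exchange_right huv.ne (by simp [hbv.symm, hzy]),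
          Set.ncard_insert_of_notMem (by simpa [adj_comm] using hTuv)] at hz
        omega
      by_cases hzb : z = b
      · subst hzb
        have : (T.exchange u v s(z, y)).neighborSet z = T.neighborSet z \ {y} := by
          ext w
          simp only [mem_neighborSet, exchange_adj huv.ne, Sym2.eq_iff, Set.mem_sdiff,
            Set.mem_singleton_iff, ne_eq]
          grind
        rw [this, Set.ncard_sdiff_singleton_of_mem (by exact hby)] at hz
        omega
      rw [neighborSet_exchange_of_ne huv.ne hzu hzv (by simp [hzb, hzy])] at hz
      exact hcon ⟨⟨hz, hzu⟩, hzv⟩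
    have h1 := Set.ncard_le_ncard hsub (Set.toFinite _)
    have h2 := Set.ncard_insert_le y ((T.leafSet \ {u}) \ {v})
    have h3 := Set.ncard_sdiff_singleton_add_one (s := T.leafSet \ {u}) (a := v)
      ⟨hv, huv.ne'⟩ (Set.toFinite _)
    have h4 := Set.ncard_sdiff_singleton_add_one hu (Set.toFinite _)
    omega
  · push Not at hbr
    have hnbr : ∀ z ∈ p.support, p.toSubgraph.neighborSet z = T.neighborSet z := fun z hz ↦
      hp.neighborSet_toSubgraph_eq_of_mem_leafSet hu hv huv.ne (fun b hb ↦ by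
        have := hbr b hb; omega) hz
    have hall : ∀ z, z ∈ p.support := by
      refine hT.connected.mem_of_adj_closed (s := {z | z ∈ p.support}) p.start_mem_support ?_
      intro a ha b hab
      have : b ∈ p.toSubgraph.neighborSet a := by rw [hnbr a ha]; exact hab
      exact (p.mem_verts_toSubgraph).1 (p.toSubgraph.edge_vert this.symm)
    by_cases hTuv : T.Adj u v
    · refine .inr ⟨T, hle, hT.connected, .inl ?_⟩
      have : p = Walk.cons hTuv Walk.nil :=
        congrArg Subtype.val ((hT.isAcyclic.subsingleton_path u v).elim ⟨p, hp⟩ (Path.singleton hTuv))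
      subst this
      have huniv : (Set.univ : Set W) ⊆ {u, v} := fun z _ ↦ by simpa using hall z
      rw [← Set.ncard_univ, ← Set.ncard_pair huv.ne]
      exact Set.ncard_le_ncard huniv (Set.toFinite _)
    · refine .inr ⟨T ⊔ edge u v, sup_le hle ((edge_le_iff Γ).2 (.inr huv)),
        hT.connected.mono le_sup_left, .inr fun z ↦ ?_⟩
      by_cases hzu : z = u
      · subst hzu
        have : (T ⊔ edge z v).neighborSet z = insert v (T.neighborSet z) := by
          ext w
          simp only [mem_neighborSet, sup_adj, edge_adj, Set.mem_insert_iff]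
          grind [huv.ne]
        rw [this, Set.ncard_insert_of_notMem (by simpa using hTuv), hu1]
      by_cases hzv : z = v
      · subst hzv
        have : (T ⊔ edge u z).neighborSet z = insert u (T.neighborSet z) := by
          ext w
          simp only [mem_neighborSet, sup_adj, edge_adj, Set.mem_insert_iff]
          grind [huv.ne]
        rw [this, Set.ncard_insert_of_notMem (by simpa [adj_comm] using hTuv), hv1]
      have : (T ⊔ edge u v).neighborSet z = T.neighborSet z := by
        ext w
        simp only [mem_neighborSet, sup_adj, edge_adj]
        grind
      rw [this, ← hnbr z (hall z)]
      obtain ⟨i, rfl, hi⟩ := Walk.mem_support_iff_exists_getVert.1 (hall z)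
      refine hp.ncard_neighborSet_toSubgraph_internal_eq_two ?_ (hi.lt_of_ne ?_)
      · rintro rfl; simp at hzu
      · rintro rfl; simp at hzv

/-- A vertex adjacent to `x` and one step closer to `u`, together with a path to `u`. -/
lemma Connected.exists_adj_dist_add_one (hT : T.Connected) (hxu : x ≠ u) :
    ∃ y, T.Adj x y ∧ T.dist y u + 1 = T.dist x u ∧
      ∃ p : T.Walk x u, p.IsPath ∧ s(x, y) ∈ p.edges := by
  obtain ⟨p, hp⟩ := hT.exists_walk_length_eq_dist x u
  have hpath := p.isPath_of_length_eq_dist hp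
  cases p with
  | nil => exact absurd rfl hxu
  | @cons _ y _ h q =>
    refine ⟨y, h, ?_, Walk.cons h q, hpath, by simp⟩
    have h1 := dist_le q
    have h2 := hT.dist_triangle (u := x) (v := y) (w := u)
    rw [dist_eq_one_iff_adj.2 h] at h2
    rw [Walk.length_cons] at hp
    omega

lemma leafSet_exchange_subset [Finite W] (hu : u ∈ T.leafSet) (hxu : ¬ T.Adj x u)
    (hne : x ≠ u) (hxy : T.Adj x y) (hyu : y ≠ u) :
    (T.exchange x u s(x, y)).leafSet \ {y} ⊆ T.leafSet \ {u} := by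
  rintro z ⟨hz, hzy⟩
  change ((T.exchange x u s(x, y)).neighborSet z).ncard = 1 at hz
  change z ≠ y at hzy
  have hu1 : (T.neighborSet u).ncard = 1 := hu
  by_cases hzu : z = u
  · subst hzu
    rw [neighborSet_exchange_right hne (by simp [hne.symm, hzy]),
      Set.ncard_insert_of_notMem (by simpa [adj_comm] using hxu)] at hz
    omega
  refine ⟨?_, hzu⟩
  by_cases hzx : z = x
  · subst hzx
    have : (T.exchange z u s(z, y)).neighborSet z = insert u (T.neighborSet z \ {y}) := by
      ext w
      simp only [mem_neighborSet, exchange_adj hne, Sym2.eq_iff, Set.mem_insert_iff,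
        Set.mem_sdiff, Set.mem_singleton_iff, ne_eq]
      grind
    rw [this, Set.ncard_insert_of_notMem (by simp [hxu]),
      Set.ncard_sdiff_singleton_add_one (by exact hxy)] at hz
    exact hz
  · rwa [neighborSet_exchange_of_ne hne hzx hzu (by simp [hzx, hzy])] at hz

lemma neighborSet_exchange_self_right (hne : x ≠ u) (hxy : T.Adj x y) (hyu : y ≠ u) :
    (T.exchange x u s(x, y)).neighborSet y = T.neighborSet y \ {x} := by
  ext w
  simp only [mem_neighborSet, exchange_adj hne, Sym2.eq_iff, Set.mem_sdiff,
    Set.mem_singleton_iff, ne_eq]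
  grind [hxy.ne]

/-- An Ore-type condition on the leaves of a spanning tree lets one save a leaf. -/
lemma IsTree.hasSpanningEnded_of_degree_sum [Finite W] {k : ℕ} (hT : T.IsTree) (hle : T ≤ Γ)
    (hk : T.leafSet.ncard = k + 1) (hk1 : 1 ≤ k)
    (hdeg : ∀ u ∈ T.leafSet, ∀ v ∈ T.leafSet, u ≠ v → ¬ Γ.Adj u v →
      Nat.card W + 1 ≤ (Γ.neighborSet u).ncard + (Γ.neighborSet v).ncard + k) :
    Γ.HasSpanningEnded k := by
  by_contra hbad
  have hind : ∀ u ∈ T.leafSet, ∀ v ∈ T.leafSet, ¬ Γ.Adj u v := fun u hu v hv h ↦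
    hbad (hT.hasSpanningEnded_of_adj_leaves hle hk.le hu hv h)
  obtain ⟨u, hu, v, hv, huv⟩ := (Set.one_lt_ncard (Set.toFinite T.leafSet)).1 (by omega)
  have hu1 : (T.neighborSet u).ncard = 1 := hu
  have hv1 : (T.neighborSet v).ncard = 1 := hv
  choose! f hfadj hfdist hfpath using
    fun x (hx : x ≠ u) ↦ hT.connected.exists_adj_dist_add_one hx
  have hfleaf : ∀ x, x ≠ u → f x ∈ T.leafSet → f x = u := by
    intro x hx hfx
    by_contra hne
    obtain ⟨w, hw⟩ := Set.ncard_eq_one.1 (show (T.neighborSet (f x)).ncard = 1 from hfx)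
    have h1 : x ∈ T.neighborSet (f x) := (hfadj x hx).symm
    have h2 : f (f x) ∈ T.neighborSet (f x) := hfadj _ hne
    rw [hw] at h1 h2
    have h3 := hfdist x hx
    have h4 := hfdist _ hne
    rw [h2, ← h1] at h4
    omega
  have hne : ∀ x ∈ Γ.neighborSet u, x ≠ u := fun x hx ↦ (show Γ.Adj u x from hx).ne'
  have hnotadj : ∀ x ∈ Γ.neighborSet u, f x ≠ u → ¬ T.Adj x u := by
    intro x hx hfx hadj
    have h1 := hfdist x (hne x hx)
    rw [dist_eq_one_iff_adj.2 hadj] at h1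
    exact hfx (hT.connected.dist_eq_zero_iff.1 (by omega))
  have htree : ∀ x ∈ Γ.neighborSet u, f x ≠ u → (T.exchange x u s(x, f x)).IsTree := by
    intro x hx hfx
    obtain ⟨p, hp, he⟩ := hfpath x (hne x hx)
    exact hT.exchange (hne x hx) (hnotadj x hx hfx) hp he
  have hcardu : (T.leafSet \ {u}).ncard = k := by
    rw [Set.ncard_sdiff_singleton_of_mem hu, hk]; rfl
  have hfdeg : ∀ x ∈ Γ.neighborSet u, f x ≠ u → (T.neighborSet (f x)).ncard = 2 := by
    intro x hx hfx
    have hxf := hfadj x (hne x hx)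
    by_contra h2
    refine hbad (.inl ⟨_, exchange_le hle (Adj.symm hx), htree x hx hfx, ?_⟩)
    have hmem : f x ∉ (T.exchange x u s(x, f x)).leafSet := by
      intro h
      change ((T.exchange x u s(x, f x)).neighborSet (f x)).ncard = 1 at h
      rw [neighborSet_exchange_self_right (hne x hx) hxf hfx] at h
      have := Set.ncard_sdiff_singleton_add_one (s := T.neighborSet (f x)) (a := x) hxf.symm
        (Set.toFinite _)
      omega
    rw [← hcardu]
    refine Set.ncard_le_ncard ?_ (Set.toFinite _)
    rw [← Set.sdiff_singleton_eq_self hmem]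
    exact leafSet_exchange_subset hu (hnotadj x hx hfx) (hne x hx) hxf hfx
  have hinj : Set.InjOn f (Γ.neighborSet u) := by
    intro x hx x' hx' hxx
    have h1 : x ∈ T.neighborSet (f x) := (hfadj x (hne x hx)).symm
    have h2 : x' ∈ T.neighborSet (f x) := by
      rw [hxx]; exact (hfadj x' (hne x' hx')).symm
    by_cases hfx : f x = u
    · rw [hfx] at h1 h2
      exact (Set.ncard_le_one (Set.toFinite _)).1 hu1.le _ h1 _ h2
    · have h3 : f (f x) ∈ T.neighborSet (f x) := hfadj _ hfx
      have d1 := hfdist x (hne x hx)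
      have d2 := hfdist x' (hne x' hx')
      have d3 := hfdist _ hfx
      rw [← hxx] at d2
      by_contra hcon
      have h5 : ({x, x', f (f x)} : Set W) ⊆ T.neighborSet (f x) := by
        rintro z (rfl | rfl | rfl) <;> assumption
      have h6 := Set.ncard_le_ncard h5 (Set.toFinite _)
      have n1 : x ≠ f (f x) := by intro h; rw [← h] at d3; omega
      have n2 : x' ≠ f (f x) := by intro h; rw [← h] at d3; omega
      rw [hfdeg x hx hfx, Set.ncard_eq_three.2 ⟨x, x', f (f x), hcon, n1, n2, rfl⟩] at h6
      omega
  have hdisj : Disjoint (Γ.neighborSet v) (f '' Γ.neighborSet u) := by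
    rw [Set.disjoint_right]
    rintro _ ⟨x, hx, rfl⟩ hvx
    change Γ.Adj v (f x) at hvx
    by_cases hfx : f x = u
    · exact hind v hv u hu (hfx ▸ hvx)
    have hxf := hfadj x (hne x hx)
    have hsub := leafSet_exchange_subset hu (hnotadj x hx hfx) (hne x hx) hxf hfx
    have hcard : (T.exchange x u s(x, f x)).leafSet.ncard ≤ k + 1 := by
      have h1 := Set.ncard_le_ncard hsub (Set.toFinite _)
      have h2 := Set.ncard_le_ncard_sdiff_add_ncard (T.exchange x u s(x, f x)).leafSet {f x}
      rw [Set.ncard_singleton] at h2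
      omega
    refine hbad ((htree x hx hfx).hasSpanningEnded_of_adj_leaves
      (exchange_le hle (Adj.symm hx)) hcard (u := v) (v := f x) ?_ ?_ hvx)
    · have hvx' : v ≠ x := by rintro rfl; exact hind u hu v hv hx
      have : ((T.exchange x u s(x, f x)).neighborSet v).ncard = 1 := by
        rwa [neighborSet_exchange_of_ne (hne x hx) hvx' huv.symm (by simp [hvx', hvx.ne])]
      exact this
    · have : ((T.exchange x u s(x, f x)).neighborSet (f x)).ncard = 1 := by
        rw [neighborSet_exchange_self_right (hne x hx) hxf hfx,
          Set.ncard_sdiff_singleton_of_mem (by exact hxf.symm), hfdeg x hx hfx]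
      exact this
  have hsub : Γ.neighborSet v ∪ f '' Γ.neighborSet u ⊆ (T.leafSet \ {u})ᶜ := by
    rintro z (hz | ⟨x, hx, rfl⟩) ⟨hzl, hzu⟩
    · exact hind v hv z hzl hz
    · exact hzu (hfleaf x (hne x hx) hzl)
  have h1 := Set.ncard_le_ncard hsub (Set.toFinite _)
  rw [Set.ncard_union_eq hdisj (Set.toFinite _) (Set.toFinite _),
    hinj.ncard_image] at h1
  have h2 := Set.ncard_add_ncard_compl (T.leafSet \ {u}) (Set.toFinite _) (Set.toFinite _)
  have h3 := hdeg u hu v hv huv (hind u hu v hv)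
  omega

/-- A graph on a vertex set `S`, contained in the graph induced by `G`, as a subgraph of `G`. -/
def Subgraph.ofInduce {G : SimpleGraph V} {S : Set V} (T : SimpleGraph S) (hT : T ≤ G.induce S) :
    G.Subgraph where
  verts := S
  Adj a b := ∃ (ha : a ∈ S) (hb : b ∈ S), T.Adj ⟨a, ha⟩ ⟨b, hb⟩
  adj_sub := fun ⟨_, _, h⟩ ↦ hT h
  edge_vert := fun ⟨ha, _, _⟩ ↦ ha
  symm := ⟨fun _ _ ⟨ha, hb, h⟩ ↦ ⟨hb, ha, h.symm⟩⟩

lemma Subgraph.coe_ofInduce {G : SimpleGraph V} {S : Set V} (T : SimpleGraph S)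
    (hT : T ≤ G.induce S) : (Subgraph.ofInduce T hT).coe = T := by
  ext ⟨a, ha⟩ ⟨b, hb⟩
  exact ⟨fun ⟨_, _, h⟩ ↦ h, fun h ↦ ⟨ha, hb, h⟩⟩

lemma Subgraph.ncard_neighborSet_coe {G : SimpleGraph V} (H : G.Subgraph) (w : H.verts) :
    (H.coe.neighborSet w).ncard = (H.neighborSet w).ncard := by
  rw [← Set.ncard_image_of_injective _ Subtype.val_injective]
  congr 1
  ext b
  exact ⟨by rintro ⟨c, hc, rfl⟩; exact hc, fun h ↦ ⟨⟨b, H.edge_vert h.symm⟩, h, rfl⟩⟩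

lemma ncard_leafSet_coe {G : SimpleGraph V} (H : G.Subgraph) :
    H.coe.leafSet.ncard = endVertexCount H := by
  rw [endVertexCount, ← Set.ncard_image_of_injective _ Subtype.val_injective]
  congr 1
  ext b
  simp only [leafSet, Set.mem_image, Set.mem_ofPred_eq, Subtype.exists,
    Subgraph.ncard_neighborSet_coe, exists_and_right, exists_eq_right]
  exact ⟨fun ⟨h, h'⟩ ↦ ⟨h, h'⟩, fun ⟨h, h'⟩ ↦ ⟨h, h'⟩⟩

lemma HasSpanningEnded.exists_isKEndedTree {G : SimpleGraph V} {S : Set V} {k : ℕ} (hk : 1 ≤ k)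
    (h : (G.induce S).HasSpanningEnded k) :
    ∃ H : G.Subgraph, IsKEndedTree G k H ∧ H.verts = S := by
  obtain ⟨T, hT, htree, hleaf⟩ | ⟨C, hC, hconn, hcyc⟩ := h
  · refine ⟨Subgraph.ofInduce T hT, .inl ⟨?_, ?_⟩, rfl⟩
    · rw [Subgraph.coe_ofInduce]; exact htree
    · rw [← ncard_leafSet_coe, Subgraph.coe_ofInduce]; exact hleaf
  · refine ⟨Subgraph.ofInduce C hC, .inr ⟨hk, ?_, ?_⟩, rfl⟩
    · rw [Subgraph.connected_iff', Subgraph.coe_ofInduce]; exact hconn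
    · refine hcyc.imp (fun h ↦ by rwa [Nat.card_coe_set_eq] at h) fun h v hv ↦ ?_
      rw [← h ⟨v, hv⟩, ← Subgraph.ncard_neighborSet_coe _ ⟨v, hv⟩, Subgraph.coe_ofInduce]
      rfl

/-- Attaching a new vertex to a leaf of a tree gives a larger tree with no more leaves. -/
lemma Subgraph.exists_isTree_of_adj_leaf [Finite V] {G : SimpleGraph V} {H : G.Subgraph}
    (hH : H.coe.IsTree) {u x : V} (hu : u ∈ H.verts) (hu1 : (H.neighborSet u).ncard = 1)
    (hx : x ∉ H.verts) (hux : G.Adj u x) :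
    ∃ H' : G.Subgraph, H'.coe.IsTree ∧ endVertexCount H' ≤ endVertexCount H ∧
      H'.verts.ncard = H.verts.ncard + 1 := by
  have hverts : (H ⊔ G.subgraphOfAdj hux).verts = insert x H.verts := by
    ext z
    simp only [Subgraph.verts_sup, subgraphOfAdj_verts, Set.mem_union, Set.mem_insert_iff,
      Set.mem_singleton_iff]
    grind
  have hncard : (H ⊔ G.subgraphOfAdj hux).verts.ncard = H.verts.ncard + 1 := by
    rw [hverts, Set.ncard_insert_of_notMem hx]
  have hedge : ∀ K : G.Subgraph, Nat.card K.coe.edgeSet = K.edgeSet.ncard := fun K ↦ by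
    rw [Nat.card_coe_set_eq, ← Subgraph.image_coe_edgeSet_coe,
      Set.ncard_image_of_injective _ (Sym2.map.injective Subtype.val_injective)]
  refine ⟨H ⊔ G.subgraphOfAdj hux, isTree_iff_connected_and_card.2 ⟨?_, ?_⟩, ?_, hncard⟩
  · exact (Subgraph.connected_sup ⟨hH.connected.preconnected⟩
      (Subgraph.subgraphOfAdj_connected hux).preconnected ⟨u, hu, by simp⟩).coe
  · have h1 := (isTree_iff_connected_and_card.1 hH).2
    rw [hedge, Nat.card_coe_set_eq] at h1 ⊢
    rw [Subgraph.edgeSet_sup, edgeSet_subgraphOfAdj, Set.union_singleton,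
      Set.ncard_insert_of_notMem, hncard, h1]
    exact fun h ↦ hx (H.edge_vert (Subgraph.mem_edgeSet.1 h).symm)
  · have hadj : ∀ a b, (H ⊔ G.subgraphOfAdj hux).Adj a b ↔
        H.Adj a b ∨ (a = u ∧ b = x ∨ a = x ∧ b = u) := fun a b ↦ by
      simp only [Subgraph.sup_adj, subgraphOfAdj_adj, Sym2.eq_iff]
      grind
    set L := {v : V | v ∈ H.verts ∧ (H.neighborSet v).ncard = 1}
    have hsub : {v : V | v ∈ (H ⊔ G.subgraphOfAdj hux).verts ∧
        ((H ⊔ G.subgraphOfAdj hux).neighborSet v).ncard = 1} ⊆ insert x (L \ {u}) := by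
      rintro z ⟨hz, hz1⟩
      rw [hverts] at hz
      obtain rfl | hzH := hz
      · exact Set.mem_insert _ _
      have hzx : z ≠ x := by rintro rfl; exact hx hzH
      by_cases hzu : z = u
      · subst hzu
        have : (H ⊔ G.subgraphOfAdj hux).neighborSet z = insert x (H.neighborSet z) := by
          ext w
          simp only [Subgraph.mem_neighborSet, hadj, Set.mem_insert_iff]
          grind
        rw [this, Set.ncard_insert_of_notMem (fun h ↦ hx (H.edge_vert h.symm))] at hz1
        omega
      · have : (H ⊔ G.subgraphOfAdj hux).neighborSet z = H.neighborSet z := by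
          ext w
          simp only [Subgraph.mem_neighborSet, hadj]
          grind
        exact .inr ⟨⟨hzH, this ▸ hz1⟩, hzu⟩
    refine (Set.ncard_le_ncard hsub (Set.toFinite _)).trans ((Set.ncard_insert_le _ _).trans ?_)
    rw [Set.ncard_sdiff_singleton_add_one (show u ∈ L from ⟨hu, hu1⟩) (Set.toFinite _)]
    rfl

lemma IsKEndedTree.ncard_le_maxKEndedOrder [Finite V] {G : SimpleGraph V} {k : ℕ}
    {H : G.Subgraph} (hH : IsKEndedTree G k H) : H.verts.ncard ≤ maxKEndedOrder G k :=
  le_csSup ⟨Nat.card V, by rintro _ ⟨K, -, rfl⟩; exact Set.ncard_le_card _⟩ ⟨H, hH, rfl⟩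

lemma minDegreeSum_two_le [Fintype V] (G : SimpleGraph V) [DecidableRel G.Adj] {u v : V}
    (huv : u ≠ v) (hadj : ¬ G.Adj u v) :
    minDegreeSum G 2 ≤ ((G.degree u + G.degree v : ℕ) : ℕ∞) := by
  classical
  have hind : IsIndSet G (({u, v} : Finset V) : Set V) := by
    intro a ha b hb
    simp only [Finset.coe_insert, Finset.coe_singleton, Set.mem_insert_iff,
      Set.mem_singleton_iff] at ha hb
    grind [G.adj_comm u v, G.irrefl (v := u), G.irrefl (v := v)]
  refine (iInf₂_le ({u, v} : Finset V) ⟨Finset.card_pair huv, hind⟩).trans ?_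
  rw [Finset.sum_pair huv]
  push_cast
  exact le_rfl

end SimpleGraph

/-- **Corollary 6.** If `G` is connected and `σ_2 ≥ t_{k+1} - k + 1` for some
positive integer `k`, then `t_k ≥ t_{k+1}`. -/
theorem corollary6 [Fintype V] (G : SimpleGraph V) [DecidableRel G.Adj]
    (hG : G.Connected) (k : ℕ) (hk : 1 ≤ k)
    (h : (maxKEndedOrder G (k + 1) : ℕ∞) + 1 ≤ minDegreeSum G 2 + (k : ℕ∞)) :
    maxKEndedOrder G k ≥ maxKEndedOrder G (k + 1) := by
  set t := maxKEndedOrder G (k + 1) with ht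
  by_cases hne : {n | ∃ H : G.Subgraph, IsKEndedTree G (k + 1) H ∧ H.verts.ncard = n}.Nonempty
  swap
  · rw [Set.not_nonempty_iff_eq_empty] at hne
    simp [ht, maxKEndedOrder, hne]
  obtain ⟨H, hH, hHt⟩ : ∃ H : G.Subgraph, IsKEndedTree G (k + 1) H ∧ H.verts.ncard = t :=
    Nat.sSup_mem hne ⟨Nat.card V, by rintro _ ⟨K, -, rfl⟩; exact Set.ncard_le_card _⟩
  obtain ⟨htree, hleaf⟩ | ⟨-, hcyc⟩ := hH
  swap
  · rw [← hHt]
    exact IsKEndedTree.ncard_le_maxKEndedOrder (.inr ⟨hk, hcyc⟩)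
  by_cases hleaf' : endVertexCount H ≤ k
  · rw [← hHt]
    exact IsKEndedTree.ncard_le_maxKEndedOrder (.inl ⟨htree, hleaf'⟩)
  have hdegree : ∀ u ∈ H.coe.leafSet,
      ((G.induce H.verts).neighborSet u).ncard = G.degree u := by
    intro u hu
    have hu1 : (H.neighborSet u).ncard = 1 := by
      rw [← Subgraph.ncard_neighborSet_coe]; exact hu
    have hmem : ∀ x, G.Adj u x → x ∈ H.verts := by
      intro x hux
      by_contra hx
      obtain ⟨H', htree', hleaf'', hcard⟩ :=
        Subgraph.exists_isTree_of_adj_leaf htree u.2 hu1 hx hux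
      have := IsKEndedTree.ncard_le_maxKEndedOrder (k := k + 1)
        (.inl ⟨htree', hleaf''.trans hleaf⟩)
      omega
    rw [← G.card_neighborFinset_eq_degree, ← Set.ncard_coe_finset, G.coe_neighborFinset,
      ← Set.ncard_image_of_injective _ Subtype.val_injective]
    congr 1
    ext x
    simp only [Set.mem_image, mem_neighborSet, comap_adj, Function.Embedding.subtype_apply,
      Subtype.exists, exists_and_left, exists_prop, exists_eq_right_right]
    exact ⟨fun h ↦ h.1, fun h ↦ ⟨h, hmem x h⟩⟩
  have hspan : (G.induce H.verts).HasSpanningEnded k := by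
    refine htree.hasSpanningEnded_of_degree_sum (fun a b hab ↦ H.adj_sub hab)
      (by rw [ncard_leafSet_coe]; omega) hk fun u hu v hv huv hadj ↦ ?_
    rw [hdegree u hu, hdegree v hv, Nat.card_coe_set_eq, hHt]
    have h2 := h.trans (add_le_add_left (minDegreeSum_two_le G
      (fun h ↦ huv (Subtype.ext h)) hadj) (k : ℕ∞))
    exact_mod_cast h2
  obtain ⟨K, hK, hKv⟩ := hspan.exists_isKEndedTree hk
  rw [← hHt, ← hKv]
  exact IsKEndedTree.ncard_le_maxKEndedOrder hK
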